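/- If V is a finite-dimensional vector space of dimension at least 2 over an infinite field K of cardinality κ, then V is not the union of a family of proper subspaces indexed by a set of cardinality strictly less than κ. -/

import Mathlib

universe u

/-- A finite-dimensional vector space of dimension at least 2 over an infinite field `K`
of cardinality `κ` is not the union of a family of proper subspaces indexed by a set of
cardinality strictly less than `κ`. -/
theorem stmt4 (K : Type u) (V : Type*) [Field K] [Infinite K] [AddCommGroup V]
    [Module K V] [FiniteDimensional K V] (hV : 2 ≤ Module.finrank K V)
    (ι : Type u) (hι : Cardinal.mk ι < Cardinal.mk K)
    (W : ι → Submodule K V) (hW : ∀ i, W i ≠ ⊤) :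
    (⋃ i, (W i : Set V)) ≠ Set.univ := by
  intro hU
  let b := Module.finBasis K V
  let v : K → V := fun t => ∑ j : Fin (Module.finrank K V), t ^ (j : ℕ) • b j
  have hv : ∀ t, ∃ i, v t ∈ W i := fun t => by
    have : v t ∈ ⋃ i, (W i : Set V) := hU ▸ Set.mem_univ _
    simpa using this
  choose g hg using hv
  have hfib : ∃ i, Infinite (g ⁻¹' {i}) := by
    rcases finite_or_infinite ι with h | h
    · exact Finite.exists_infinite_fiber g
    · exact Cardinal.exists_infinite_fiber g hι
  obtain ⟨i, hi⟩ := hfib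
  obtain ⟨f, hf, hWf⟩ := Submodule.exists_le_ker_of_lt_top (W i) (hW i).lt_top
  let p : Polynomial K := ∑ j : Fin (Module.finrank K V), Polynomial.C (f (b j)) * Polynomial.X ^ (j : ℕ)
  have hp : p = 0 := by
    apply Polynomial.eq_zero_of_infinite_isRoot
    refine (Set.infinite_coe_iff.mp hi).mono ?_
    intro t ht
    have h1 : v t ∈ W i := by
      have : g t = i := ht
      exact this ▸ hg t
    have h2 : f (v t) = 0 := hWf h1
    simp only [v, map_sum, map_smul, smul_eq_mul] at h2
    simp only [Set.mem_ofPred_eq, Polynomial.IsRoot, p, Polynomial.eval_finsetSum,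
      Polynomial.eval_mul, Polynomial.eval_C, Polynomial.eval_pow, Polynomial.eval_X]
    rw [← h2]
    exact Finset.sum_congr rfl fun j _ => mul_comm _ _
  apply hf
  apply b.ext
  intro j
  have h3 : p.coeff j = 0 := by rw [hp]; simp
  simpa [p, Polynomial.finsetSum_coeff, Polynomial.coeff_C_mul, Polynomial.coeff_X_pow,
    Fin.val_inj] using h3
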